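/- Every connected nonempty 1-dimensional topological manifold with boundary is homeomorphic to exactly one of: ℝ, the circle S¹, the half-line [0,∞), or the closed interval [0,1]. -/

import Mathlib

namespace OneMfd

open Set Filter Topology

set_option linter.unusedSectionVars false

variable {X : Type*} [TopologicalSpace X]

structure IsCh (p : X) (h : ℝ → X) (k : X → ℝ) (r : ℝ) (S : Set ℝ) : Prop where
  rpos : 0 < r
  hS : S = Ioo (-r) r ∨ S = Ico 0 r
  hc : ContinuousOn h S
  inv : ∀ t ∈ S, k (h t) = t
  op : IsOpen (h '' S)
  kc : ContinuousOn k (h '' S)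
  h0 : h 0 = p

theorem IsCh.sub {p : X} {h : ℝ → X} {k : X → ℝ} {r : ℝ} {S : Set ℝ} (H : IsCh p h k r S) :
    Ico 0 r ⊆ S := by
  have := H.rpos
  rcases H.hS with e | e <;> rw [e]
  exact fun t ht => ⟨by linarith [ht.1], ht.2⟩

theorem IsCh.sup {p : X} {h : ℝ → X} {k : X → ℝ} {r : ℝ} {S : Set ℝ} (H : IsCh p h k r S) :
    S ⊆ Ioo (-r) r := by
  have := H.rpos
  rcases H.hS with e | e <;> rw [e]
  exact fun t ht => ⟨by linarith [ht.1], ht.2⟩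

theorem IsCh.zero {p : X} {h : ℝ → X} {k : X → ℝ} {r : ℝ} {S : Set ℝ} (H : IsCh p h k r S) :
    (0:ℝ) ∈ S := H.sub ⟨le_rfl, H.rpos⟩

theorem IsCh.hk {p : X} {h : ℝ → X} {k : X → ℝ} {r : ℝ} {S : Set ℝ} (H : IsCh p h k r S)
    {x : X} (hx : x ∈ h '' S) : h (k x) = x ∧ k x ∈ S := by
  obtain ⟨t, ht, rfl⟩ := hx
  rw [H.inv t ht]; exact ⟨rfl, ht⟩

theorem IsCh.inj {p : X} {h : ℝ → X} {k : X → ℝ} {r : ℝ} {S : Set ℝ} (H : IsCh p h k r S) :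
    InjOn h S := fun s hs t ht e => by rw [← H.inv s hs, e, H.inv t ht]

theorem IsCh.openIm {p : X} {h : ℝ → X} {k : X → ℝ} {r : ℝ} {S : Set ℝ} (H : IsCh p h k r S)
    {O : Set ℝ} (hO : IsOpen O) : IsOpen (h '' (S ∩ O)) := by
  have : h '' (S ∩ O) = h '' S ∩ k ⁻¹' O := by
    ext x; constructor
    · rintro ⟨t, ⟨ht, ho⟩, rfl⟩
      exact ⟨⟨t, ht, rfl⟩, by simpa [H.inv t ht] using ho⟩
    · rintro ⟨hx, ho⟩
      exact ⟨k x, ⟨(H.hk hx).2, ho⟩, (H.hk hx).1⟩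
  rw [this]
  exact H.kc.isOpen_inter_preimage H.op hO

theorem IsCh.kp {p : X} {h : ℝ → X} {k : X → ℝ} {r : ℝ} {S : Set ℝ} (H : IsCh p h k r S) :
    k p = 0 := by rw [← H.h0, H.inv 0 H.zero]

theorem IsCh.pmem {p : X} {h : ℝ → X} {k : X → ℝ} {r : ℝ} {S : Set ℝ} (H : IsCh p h k r S) :
    p ∈ h '' S := ⟨0, H.zero, H.h0⟩

/-- small neighborhoods -/
theorem IsCh.small {p : X} {h : ℝ → X} {k : X → ℝ} {r : ℝ} {S : Set ℝ} (H : IsCh p h k r S)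
    {N : Set X} (hN : N ∈ 𝓝 p) : ∃ δ, 0 < δ ∧ δ < r ∧ h '' (S ∩ Ioo (-δ) δ) ⊆ N := by
  have h1 : h ⁻¹' N ∈ 𝓝[S] (0:ℝ) := by
    apply H.hc 0 H.zero
    rw [H.h0]; exact hN
  rw [Metric.mem_nhdsWithin_iff] at h1
  obtain ⟨ε, he, hs⟩ := h1
  have := H.rpos
  refine ⟨min ε (r/2), by positivity, by linarith [min_le_right ε (r/2)], ?_⟩
  rintro _ ⟨t, ⟨ht, ht'⟩, rfl⟩
  apply hs
  refine ⟨?_, ht⟩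
  rw [Metric.mem_ball, Real.dist_eq, sub_zero, abs_lt]
  have := min_le_left ε (r/2)
  exact ⟨by linarith [ht'.1], by linarith [ht'.2]⟩

theorem IsCh.nhd {p : X} {h : ℝ → X} {k : X → ℝ} {r : ℝ} {S : Set ℝ} (H : IsCh p h k r S)
    {δ : ℝ} (hδ : 0 < δ) : h '' (S ∩ Ioo (-δ) δ) ∈ 𝓝 p :=
  (H.openIm isOpen_Ioo).mem_nhds ⟨0, ⟨H.zero, by constructor <;> linarith⟩, H.h0⟩

theorem exists_ch [ChartedSpace (EuclideanHalfSpace 1) X] (p : X) :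
    ∃ h k r S, IsCh p h k r S := by
  let e := chartAt (EuclideanHalfSpace 1) p
  let ι : ℝ → EuclideanHalfSpace 1 := fun t => ⟨WithLp.toLp 2 (fun _ => max t 0), by simp⟩
  have hι : Continuous ι := by
    apply Continuous.subtype_mk
    fun_prop
  let π : EuclideanHalfSpace 1 → ℝ := fun x => x.1 0
  have hπ : Continuous π := by fun_prop
  have hπι : ∀ t, 0 ≤ t → π (ι t) = t := fun t ht => by simp [π, ι, ht]
  have hιπ : ∀ x, ι (π x) = x := fun x => by
    apply Subtype.ext
    ext i
    have : i = 0 := Subsingleton.elim _ _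
    subst this
    simpa [π, ι] using x.2
  have hπ0 : ∀ x, 0 ≤ π x := fun x => x.2
  set c := π (e p) with hcdef
  have hps : p ∈ e.source := mem_chart_source _ p
  have h1 : ι ⁻¹' e.target ∈ 𝓝 c :=
    (e.open_target.preimage hι).mem_nhds (by
      rw [mem_preimage, hcdef, hιπ]; exact e.map_source hps)
  obtain ⟨ε, he, hs⟩ := Metric.mem_nhds_iff.1 h1
  -- general
  have key : ∀ (r : ℝ) (S : Set ℝ), 0 < r → r ≤ ε → (S = Ioo (-r) r ∨ S = Ico 0 r) →
      (∀ t ∈ Ioo (-r) r, 0 ≤ t + c ↔ t ∈ S) →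
      IsCh p (fun t => e.symm (ι (t + c))) (fun x => π (e x) - c) r S := by
    intro r S hr hre hS hS'
    have hsub : S ⊆ Ioo (-r) r := by
      rcases hS with e | e <;> rw [e]
      exact fun t ht => ⟨by linarith [ht.1], ht.2⟩
    have htar : ∀ t ∈ Ioo (-r) r, ι (t + c) ∈ e.target := fun t ht => by
      apply hs
      rw [Metric.mem_ball, Real.dist_eq, abs_lt]
      exact ⟨by linarith [ht.1], by linarith [ht.2]⟩
    have hinv : ∀ t ∈ S, π (e (e.symm (ι (t + c)))) - c = t := fun t ht => by
      rw [e.right_inv (htar t (hsub ht)), hπι _ ((hS' t (hsub ht)).2 ht)]; ring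
    have him : (fun t => e.symm (ι (t + c))) '' S = e.source ∩ e ⁻¹' ((fun x => π x - c) ⁻¹' (Ioo (-r) r)) := by
      ext x; constructor
      · rintro ⟨t, ht, rfl⟩
        refine ⟨e.map_target (htar t (hsub ht)), ?_⟩
        simp only [mem_preimage]
        rw [hinv t ht]; exact hsub ht
      · rintro ⟨hx, hx'⟩
        refine ⟨π (e x) - c, ?_, ?_⟩
        · rw [← hS' _ hx']; simpa using hπ0 _
        · simp [hιπ, e.left_inv hx]
    refine ⟨hr, hS, ?_, hinv, ?_, ?_, ?_⟩
    · refine e.continuousOn_symm.comp (by fun_prop) ?_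
      exact fun t ht => htar t (hsub ht)
    · rw [him]
      exact e.isOpen_inter_preimage (isOpen_Ioo.preimage (by fun_prop))
    · rw [him]
      refine ContinuousOn.sub ?_ continuousOn_const
      exact hπ.comp_continuousOn (e.continuousOn.mono inter_subset_left)
    · simp [hcdef, hιπ, e.left_inv hps]
  rcases (hπ0 (e p)).lt_or_eq with hc | hc
  · refine ⟨_, _, min ε c, _, key (min ε c) _ (lt_min he hc) (min_le_left _ _) (Or.inl rfl) ?_⟩
    intro t ht
    have := min_le_right ε c
    exact ⟨fun _ => ht, fun _ => by linarith [ht.1]⟩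
  · refine ⟨_, _, ε, _, key ε _ he le_rfl (Or.inr rfl) ?_⟩
    intro t ht
    have hc' : c = 0 := hc.symm
    rw [hc', add_zero]
    exact ⟨fun h => ⟨h, ht.2⟩, fun h => h.1⟩

/-- L1 -/
theorem limit_of_cluster [T2Space X] {a b : ℝ} {g : ℝ → X} (hab : a < b)
    (gc : ContinuousOn g (Ioo a b)) (gi : InjOn g (Ioo a b))
    {p : X} {h : ℝ → X} {k : X → ℝ} {r : ℝ} {S : Set ℝ} (H : IsCh p h k r S)
    (hcl : ∀ N ∈ 𝓝 p, ∃ᶠ t in 𝓝[<] b, g t ∈ N) : Tendsto g (𝓝[<] b) (𝓝 p) := by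
  have avoid : ∀ x : X, ∀ᶠ t in 𝓝[<] b, g t ≠ x := by
    intro x
    by_cases hx : ∃ t ∈ Ioo a b, g t = x
    · obtain ⟨t, ht, rfl⟩ := hx
      filter_upwards [Ioo_mem_nhdsLT ht.2] with s hs e
      have := gi ⟨ht.1.trans hs.1, hs.2⟩ ht e
      exact absurd this hs.1.ne'
    · push Not at hx
      filter_upwards [Ioo_mem_nhdsLT hab] with s hs using hx s hs
  intro N hN
  obtain ⟨δ, h0, hr, hsub⟩ := H.small hN
  have hev := ((avoid (h δ)).and (avoid (h (-δ)))).and (Ioo_mem_nhdsLT hab)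
  obtain ⟨b', hb', hev'⟩ := (mem_nhdsLT_iff_exists_Ioo_subset' hab).1 hev
  have hb : b' < b := hb'
  have hev'' : Ioo b' b ⊆ Ioo a b := fun t ht => (hev' ht).2
  have him : IsPreconnected (g '' Ioo b' b) := isPreconnected_Ioo.image _ (gc.mono hev'')
  have hcomp : IsCompact (h '' (S ∩ Icc (-δ) δ)) := by
    apply IsCompact.image_of_continuousOn _ (H.hc.mono inter_subset_left)
    rcases H.hS with e | e <;> rw [e]
    · have : Ioo (-r) r ∩ Icc (-δ) δ = Icc (-δ) δ := by
        apply inter_eq_right.2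
        exact fun t ht => ⟨by linarith [ht.1], by linarith [ht.2]⟩
      rw [this]; exact isCompact_Icc
    · have : Ico 0 r ∩ Icc (-δ) δ = Icc 0 δ := by
        ext t; simp only [mem_inter_iff, mem_Ico, mem_Icc]
        constructor
        · rintro ⟨⟨_, _⟩, _, _⟩; constructor <;> linarith
        · rintro ⟨_, _⟩; refine ⟨⟨?_, ?_⟩, ?_, ?_⟩ <;> linarith
      rw [this]; exact isCompact_Icc
  have hsubset : g '' Ioo b' b ⊆ h '' (S ∩ Ioo (-δ) δ) := by
    refine him.subset_left_of_subset_union (H.openIm isOpen_Ioo)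
      (hcomp.isClosed.isOpen_compl) ?_ ?_ ?_
    · rw [disjoint_compl_right_iff_subset]
      exact image_mono (inter_subset_inter_right _ Ioo_subset_Icc_self)
    · rintro _ ⟨t, ht, rfl⟩
      by_cases hx : g t ∈ h '' (S ∩ Icc (-δ) δ)
      · left
        obtain ⟨s, ⟨hs, hs'⟩, e⟩ := hx
        refine ⟨s, ⟨hs, ?_, ?_⟩, e⟩
        · refine lt_of_le_of_ne hs'.1 ?_
          rintro rfl
          exact (hev' ht).1.2 e.symm
        · refine lt_of_le_of_ne hs'.2 ?_
          rintro rfl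
          exact (hev' ht).1.1 e.symm
      · right; exact hx
    · obtain ⟨t, ht, ht'⟩ := ((hcl _ (H.nhd h0)).and_eventually (Ioo_mem_nhdsLT hb)).exists
      exact ⟨g t, ⟨t, ht', rfl⟩, ht⟩
  have hfin : ∀ᶠ t in 𝓝[<] b, g t ∈ N := by
    filter_upwards [Ioo_mem_nhdsLT hb] with t ht
    exact hsub (hsubset ⟨t, ht, rfl⟩)
  exact hfin

/-- closure points come from the ends -/
theorem cluster_of_closure [T2Space X] {a b : ℝ} {g : ℝ → X}
    (gc : ContinuousOn g (Ioo a b)) {p : X} (hp : p ∉ g '' Ioo a b) {A : Set X} (hA : A ⊆ g '' Ioo a b)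
    (hcl : p ∈ closure A) :
    (∀ N ∈ 𝓝 p, ∃ᶠ t in 𝓝[<] b, g t ∈ N ∩ A) ∨ (∀ N ∈ 𝓝 p, ∃ᶠ t in 𝓝[<] (-a), g (-t) ∈ N ∩ A) := by
  by_contra! hcon
  obtain ⟨⟨N, hN, h1⟩, M, hM, h2⟩ := hcon
  have hab : a < b := by
    obtain ⟨x, hx⟩ := (mem_closure_iff_nhds.1 hcl univ univ_mem)
    obtain ⟨t, ht, -⟩ := hA hx.2
    exact ht.1.trans ht.2
  obtain ⟨b', hb', h1⟩ := (mem_nhdsLT_iff_exists_Ioo_subset' hab).1 h1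
  obtain ⟨a', ha', h2⟩ := (mem_nhdsLT_iff_exists_Ioo_subset' (neg_lt_neg hab)).1 h2
  simp only [mem_Iio] at ha' hb'
  by_cases hle : -a' ≤ b'
  swap
  · obtain ⟨x, ⟨hx, hx'⟩, hx2⟩ := mem_closure_iff_nhds.1 hcl _ (inter_mem hN hM)
    obtain ⟨t, ht, rfl⟩ := hA hx2
    rcases lt_or_ge b' t with h | h
    · exact h1 ⟨h, ht.2⟩ ⟨hx, hx2⟩
    · exact h2 (a := -t) ⟨by linarith, by linarith [ht.1]⟩ (by simpa using ⟨hx', hx2⟩)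
  have hsub : Icc (-a') b' ⊆ Ioo a b := fun t ht => ⟨by linarith [ht.1], by linarith [ht.2]⟩
  have hC : IsCompact (g '' Icc (-a') b') := isCompact_Icc.image_of_continuousOn (gc.mono hsub)
  have hpC : (g '' Icc (-a') b')ᶜ ∈ 𝓝 p := hC.isClosed.isOpen_compl.mem_nhds
    (fun h => hp (image_mono hsub h))
  obtain ⟨x, ⟨⟨hx, hx'⟩, hxC⟩, hx2⟩ := mem_closure_iff_nhds.1 hcl _ (inter_mem (inter_mem hN hM) hpC)
  obtain ⟨t, ht, rfl⟩ := hA hx2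
  rcases lt_or_ge b' t with h | h
  · exact h1 ⟨h, ht.2⟩ ⟨hx, hx2⟩
  rcases lt_or_ge t (-a') with h' | h'
  · exact h2 (a := -t) ⟨by linarith, by linarith [ht.1]⟩ (by simpa using ⟨hx', hx2⟩)
  · exact hxC ⟨t, ⟨h', h⟩, rfl⟩

/-- behaviour at an end -/
theorem end_sign {a b : ℝ} {g : ℝ → X} (hab : a < b)
    (gc : ContinuousOn g (Ioo a b)) {p : X} (hp : p ∉ g '' Ioo a b)
    {h : ℝ → X} {k : X → ℝ} {r : ℝ} {S : Set ℝ} (H : IsCh p h k r S)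
    (hl : Tendsto g (𝓝[<] b) (𝓝 p)) :
    ∃ σ : ℝ, (σ = 1 ∨ σ = -1) ∧ (∀ᶠ t in 𝓝[<] b, g t ∈ h '' S ∧ 0 < σ * k (g t)) ∧
      ∀ c, a ≤ c → c < b → ∃ η, 0 < η ∧ ∀ y, 0 < y → y < η → h (σ * y) ∈ g '' Ioo c b := by
  have hev : ∀ᶠ t in 𝓝[<] b, g t ∈ h '' S ∧ t ∈ Ioo a b :=
    (hl.eventually (H.op.mem_nhds H.pmem)).and (Ioo_mem_nhdsLT hab)
  obtain ⟨b', hb', hev'⟩ := (mem_nhdsLT_iff_exists_Ioo_subset' hab).1 hev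
  have hb : b' < b := hb'
  have fc : ContinuousOn (fun t => k (g t)) (Ioo b' b) :=
    H.kc.comp (gc.mono fun t ht => (hev' ht).2) fun t ht => (hev' ht).1
  have fne : ∀ t ∈ Ioo b' b, k (g t) ≠ 0 := by
    intro t ht e
    have := (H.hk (hev' ht).1).1
    rw [e, H.h0] at this
    exact hp ⟨t, (hev' ht).2, this.symm⟩
  have fl : Tendsto (fun t => k (g t)) (𝓝[<] b) (𝓝 0) := by
    have := (H.kc.continuousAt (H.op.mem_nhds H.pmem)).tendsto.comp hl
    rwa [H.kp] at this
  have hsg : ∃ σ : ℝ, (σ = 1 ∨ σ = -1) ∧ ∀ t ∈ Ioo b' b, 0 < σ * k (g t) := by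
    by_contra! hcon
    obtain ⟨s, hs, h1⟩ := hcon 1 (Or.inl rfl)
    obtain ⟨t, ht, h2⟩ := hcon (-1) (Or.inr rfl)
    have := isPreconnected_Ioo.intermediate_value hs ht fc
    obtain ⟨u, hu, e⟩ := this (show (0:ℝ) ∈ _ from ⟨by linarith, by linarith⟩)
    exact fne u hu e
  obtain ⟨σ, hσ, hpos⟩ := hsg
  have hσ2 : σ * σ = 1 := by rcases hσ with rfl | rfl <;> norm_num
  refine ⟨σ, hσ, ?_, ?_⟩
  · filter_upwards [Ioo_mem_nhdsLT hb] with t ht using ⟨(hev' ht).1, hpos t ht⟩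
  · intro c hac hcb
    obtain ⟨t0, ht0⟩ := exists_between (max_lt hcb hb)
    have ht0b : t0 ∈ Ioo b' b := ⟨(le_max_right _ _).trans_lt ht0.1, ht0.2⟩
    refine ⟨σ * k (g t0), hpos t0 ht0b, ?_⟩
    intro y hy hyη
    have fl' : Tendsto (fun t => σ * k (g t)) (𝓝[<] b) (𝓝 0) := by
      simpa using fl.const_mul σ
    obtain ⟨t1, ht1, ht1'⟩ := ((fl'.eventually (gt_mem_nhds hy)).and (Ioo_mem_nhdsLT ht0.2)).exists
    have ht1b : t1 ∈ Ioo b' b := ⟨ht0b.1.trans ht1'.1, ht1'.2⟩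
    have hsub : Icc t0 t1 ⊆ Ioo b' b := fun t ht => ⟨ht0b.1.trans_le ht.1, ht.2.trans_lt ht1b.2⟩
    obtain ⟨u, hu, e⟩ := intermediate_value_Icc' ht1'.1.le
      ((continuousOn_const (c := σ)).mul (fc.mono hsub)) (show y ∈ _ from ⟨ht1.le, hyη.le⟩)
    refine ⟨u, ⟨((le_max_left _ _).trans_lt ht0.1).trans_le hu.1, (hsub hu).2⟩, ?_⟩
    rw [← (H.hk (hev' (hsub hu)).1).1]
    congr 1
    have e' : σ * k (g u) = y := e
    rw [← e', ← mul_assoc, hσ2, one_mul]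

/-- invariance of domain -/
theorem image_nhds [ChartedSpace (EuclideanHalfSpace 1) X] {a b : ℝ} {g : ℝ → X}
    (gc : ContinuousOn g (Ioo a b)) (gi : InjOn g (Ioo a b)) {t : ℝ} (ht : t ∈ Ioo a b) 
    : g '' Ioo a b ∈ 𝓝 (g t) := by
  obtain ⟨h, k, r, S, H⟩ := exists_ch (g t)
  have h1 : g ⁻¹' (h '' S) ∩ Ioo a b ∈ 𝓝 t :=
    inter_mem ((gc.continuousAt (isOpen_Ioo.mem_nhds ht)) (H.op.mem_nhds H.pmem))
      (isOpen_Ioo.mem_nhds ht)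
  obtain ⟨ε, he, hs⟩ := Metric.nhds_basis_closedBall.mem_iff.1 h1
  rw [Real.closedBall_eq_Icc] at hs
  set f := fun s => k (g s) with hf
  have fc : ContinuousOn f (Icc (t - ε) (t + ε)) :=
    H.kc.comp (gc.mono fun s hs' => (hs hs').2) fun s hs' => (hs hs').1
  have fi : InjOn f (Icc (t - ε) (t + ε)) := by
    intro u hu v hv e
    apply gi (hs hu).2 (hs hv).2
    rw [← (H.hk (hs hu).1).1, ← (H.hk (hs hv).1).1]
    exact congrArg h e
  have ft : f t = 0 := H.kp
  have hm := fc.strictMonoOn_of_injOn_Icc' (by linarith) fi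
  have m0 : t - ε ∈ Icc (t - ε) (t + ε) := ⟨le_rfl, by linarith⟩
  have m1 : t ∈ Icc (t - ε) (t + ε) := ⟨by linarith, by linarith⟩
  have m2 : t + ε ∈ Icc (t - ε) (t + ε) := ⟨by linarith, le_rfl⟩
  have hI : ∃ η, 0 < η ∧ Ioo (-η) η ⊆ f '' Icc (t - ε) (t + ε) := by
    rcases hm with hm | hm
    · have q1 := hm m0 m1 (by linarith)
      have q2 := hm m1 m2 (by linarith)
      rw [ft] at q1 q2
      refine ⟨min (-f (t - ε)) (f (t+ε)), lt_min (by linarith) q2, ?_⟩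
      refine Subset.trans ?_ (intermediate_value_Icc (by linarith) fc)
      intro y hy
      have := min_le_left (-f (t - ε)) (f (t+ε))
      have := min_le_right (-f (t - ε)) (f (t+ε))
      exact ⟨by linarith [hy.1], by linarith [hy.2]⟩
    · have q1 := hm m0 m1 (by linarith)
      have q2 := hm m1 m2 (by linarith)
      rw [ft] at q1 q2
      refine ⟨min (f (t - ε)) (-f (t+ε)), lt_min (by linarith) (by linarith), ?_⟩
      refine Subset.trans ?_ (intermediate_value_Icc' (by linarith) fc)
      intro y hy
      have := min_le_left (f (t - ε)) (-f (t+ε))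
      have := min_le_right (f (t - ε)) (-f (t+ε))
      exact ⟨by linarith [hy.1], by linarith [hy.2]⟩
  obtain ⟨η, hη, hsub⟩ := hI
  refine mem_of_superset (H.nhd hη) ?_
  rintro _ ⟨y, ⟨hyS, hy⟩, rfl⟩
  obtain ⟨s, hs', e⟩ := hsub hy
  refine ⟨s, (hs hs').2, ?_⟩
  rw [← e]
  exact (H.hk (hs hs').1).1.symm

/-- a bounded monotone weight -/
noncomputable def wt [SecondCountableTopology X] [Nonempty X] (A : Set X) : ℝ :=
  ∑' n : ℕ, A.indicator (fun _ => (1:ℝ)) (TopologicalSpace.denseSeq X n) * (1/2) ^ n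

theorem wt_summable [SecondCountableTopology X] [Nonempty X] (A : Set X) :
    Summable fun n : ℕ => A.indicator (fun _ => (1:ℝ)) (TopologicalSpace.denseSeq X n) * (1/2) ^ n := by
  classical
  refine Summable.of_nonneg_of_le (fun n => ?_) (fun n => ?_) summable_geometric_two
  · simp only [indicator_apply]; split_ifs <;> positivity
  · simp only [indicator_apply]; split_ifs <;> simp

theorem wt_mono [SecondCountableTopology X] [Nonempty X] {A B : Set X} (h : A ⊆ B) : wt A ≤ wt B := by
  classical
  refine Summable.tsum_le_tsum (fun n => ?_) (wt_summable A) (wt_summable B)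
  gcongr

theorem wt_lt [SecondCountableTopology X] [Nonempty X] {A B O : Set X} (h : A ⊆ B) (hO : IsOpen O)
    (hne : O.Nonempty) (hOB : O ⊆ B) (hd : Disjoint A O) : wt A < wt B := by
  classical
  obtain ⟨n, hn⟩ := (TopologicalSpace.denseRange_denseSeq X).exists_mem_open hO hne
  refine Summable.tsum_lt_tsum (i := n) (fun n => ?_) ?_ (wt_summable A) (wt_summable B)
  · gcongr
  · have h1 : TopologicalSpace.denseSeq X n ∉ A := fun h' => disjoint_left.1 hd h' hn
    simp [h1, hOB hn]

theorem wt_nonneg [SecondCountableTopology X] [Nonempty X] (A : Set X) : 0 ≤ wt A := by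
  classical
  refine tsum_nonneg fun n => ?_
  simp only [indicator_apply]; split_ifs <;> positivity

/-- arcs -/
structure Arc [SecondCountableTopology X] [Nonempty X] (a b : ℝ) (g : ℝ → X) : Prop where
  lt : a < b
  c : ContinuousOn g (Ioo a b)
  i : InjOn g (Ioo a b)
  w : b - a ≤ wt (g '' Ioo a b)

theorem image_neg' (a b : ℝ) (g : ℝ → X) :
    (fun t => g (-t)) '' Ioo (-b) (-a) = g '' Ioo a b := by
  ext x; constructor
  · rintro ⟨t, ht, rfl⟩; exact ⟨-t, ⟨by linarith [ht.2], by linarith [ht.1]⟩, rfl⟩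
  · rintro ⟨t, ht, rfl⟩; exact ⟨-t, ⟨by linarith [ht.2], by linarith [ht.1]⟩, by simp⟩

theorem Arc.neg [SecondCountableTopology X] [Nonempty X] {a b : ℝ} {g : ℝ → X} (A : Arc a b g) :
    Arc (-b) (-a) (fun t => g (-t)) := by
  have hm : MapsTo (fun t : ℝ => -t) (Ioo (-b) (-a)) (Ioo a b) := fun t ht =>
    ⟨by linarith [ht.2], by linarith [ht.1]⟩
  refine ⟨by linarith [A.lt], A.c.comp continuousOn_neg hm, ?_, ?_⟩
  · intro s hs t ht e
    exact neg_injective (A.i (hm hs) (hm ht) e)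
  · rw [image_neg']; linarith [A.w]

/-- extension on the right -/
theorem Arc.ext [SecondCountableTopology X] [Nonempty X] {a b : ℝ} {g : ℝ → X} (A : Arc a b g)
    {q : ℝ → X} (qc : ContinuousOn q (Ico 0 1)) (qi : InjOn q (Ico 0 1))
    (ql : Tendsto g (𝓝[<] b) (𝓝 (q 0))) (qd : Disjoint (g '' Ioo a b) (q '' Ico 0 1))
    {O : Set X} (hO : IsOpen O) (hne : O.Nonempty) (hOq : O ⊆ q '' Ico 0 1) :
    ∃ b' g', b < b' ∧ Arc a b' g' ∧ EqOn g g' (Ioo a b) := by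
  classical
  set δ := wt (g '' Ioo a b ∪ q '' Ico 0 1) - wt (g '' Ioo a b) with hδ
  have hab := A.lt
  have δ0 : 0 < δ := by
    have := wt_lt (A := g '' Ioo a b) subset_union_left hO hne
      (hOq.trans subset_union_right) (qd.mono_right hOq)
    rw [hδ]; linarith
  set g' : ℝ → X := fun t => if t < b then g t else q ((t - b) / δ) with hg'
  have e1 : ∀ t, t < b → g' t = g t := fun t ht => by simp [hg', ht]
  have e2 : ∀ t, b ≤ t → g' t = q ((t - b) / δ) := fun t ht => by simp [hg', ht]
  have hq : MapsTo (fun t => (t - b) / δ) (Ico b (b + δ)) (Ico 0 1) := fun t ht => by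
    constructor
    · exact div_nonneg (by linarith [ht.1]) δ0.le
    · rw [div_lt_one δ0]; linarith [ht.2]
  have him : g' '' Ioo a (b + δ) = g '' Ioo a b ∪ q '' Ico 0 1 := by
    ext x; constructor
    · rintro ⟨t, ht, rfl⟩
      rcases lt_or_ge t b with h | h
      · left; rw [e1 t h]; exact ⟨t, ⟨ht.1, h⟩, rfl⟩
      · right; rw [e2 t h]; exact ⟨_, hq ⟨h, ht.2⟩, rfl⟩
    · rintro (⟨t, ht, rfl⟩ | ⟨t, ht, rfl⟩)
      · exact ⟨t, ⟨ht.1, by linarith [ht.2]⟩, e1 t ht.2⟩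
      · have : 0 ≤ δ * t := mul_nonneg δ0.le ht.1
        refine ⟨b + δ * t, ⟨by linarith, ?_⟩, ?_⟩
        · nlinarith [ht.2]
        · rw [e2 _ (by linarith)]; congr 1; field_simp; ring
  refine ⟨b + δ, g', by linarith, ⟨by linarith, ?_, ?_, ?_⟩, fun t ht => (e1 t ht.2).symm⟩
  · intro t ht
    rcases lt_trichotomy t b with h | h | h
    · apply ContinuousAt.continuousWithinAt
      have : g' =ᶠ[𝓝 t] g := by
        filter_upwards [Iio_mem_nhds h] with s hs using e1 s hs
      exact (A.c.continuousAt (Ioo_mem_nhds ht.1 h)).congr this.symm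
    · subst h
      apply ContinuousAt.continuousWithinAt
      rw [continuousAt_iff_continuous_left'_right']
      constructor
      · have h0 : g' t = q 0 := by rw [e2 t le_rfl]; simp
        unfold ContinuousWithinAt
        rw [h0]
        refine ql.congr' ?_
        filter_upwards [self_mem_nhdsWithin] with s hs using (e1 s hs).symm
      · have h1 : ContinuousWithinAt (fun s => q ((s - t) / δ)) (Ico t (t + δ)) t :=
          (qc.comp (by fun_prop) hq) t ⟨le_rfl, by linarith⟩
        have h2 : ContinuousWithinAt g' (Ico t (t + δ)) t :=
          h1.congr (fun s hs => e2 s hs.1) (e2 t le_rfl)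
        exact (h2.mono Ioo_subset_Ico_self).mono_of_mem_nhdsWithin (Ioo_mem_nhdsGT (by linarith))
    · apply ContinuousAt.continuousWithinAt
      have : g' =ᶠ[𝓝 t] fun s => q ((s - b) / δ) := by
        filter_upwards [Ioi_mem_nhds h] with s hs using e2 s (le_of_lt hs)
      refine ContinuousAt.congr ?_ this.symm
      exact (qc.comp (by fun_prop) hq).continuousAt (Ico_mem_nhds h ht.2)
  · intro s hs t ht e
    rcases lt_or_ge s b with h | h <;> rcases lt_or_ge t b with h' | h'
    · rw [e1 s h, e1 t h'] at e; exact A.i ⟨hs.1, h⟩ ⟨ht.1, h'⟩ e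
    · rw [e1 s h, e2 t h'] at e
      exact (disjoint_left.1 qd ⟨s, ⟨hs.1, h⟩, rfl⟩ ⟨_, hq ⟨h', ht.2⟩, e.symm⟩).elim
    · rw [e2 s h, e1 t h'] at e
      exact (disjoint_left.1 qd ⟨t, ⟨ht.1, h'⟩, rfl⟩ ⟨_, hq ⟨h, hs.2⟩, e⟩).elim
    · rw [e2 s h, e2 t h'] at e
      have := qi (hq ⟨h, hs.2⟩) (hq ⟨h', ht.2⟩) e
      have := (div_left_inj' δ0.ne').1 this
      linarith
  · rw [him]; linarith [A.w]

theorem exists_arc [SecondCountableTopology X] [Nonempty X] [ChartedSpace (EuclideanHalfSpace 1) X] :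
    ∃ a b, ∃ g : ℝ → X, Arc a b g := by
  obtain ⟨p⟩ := ‹Nonempty X›
  obtain ⟨h, k, r, S, H⟩ := exists_ch p
  have r0 := H.rpos
  have hsub : Ioo 0 r ⊆ S := Ioo_subset_Ico_self.trans H.sub
  have hop : IsOpen (h '' Ioo 0 r) := by
    have := H.openIm (isOpen_Ioo (a := 0) (b := r))
    rwa [inter_eq_right.2 hsub] at this
  have : Nonempty X := ⟨p⟩
  set δ := wt (h '' Ioo 0 r) with hδ
  have δ0 : 0 < δ := (wt_nonneg (∅ : Set X)).trans_lt (wt_lt (empty_subset _) hop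
    ((nonempty_Ioo.2 r0).image _) le_rfl (empty_disjoint _))
  have hm : MapsTo (fun t => t * (r / δ)) (Ioo 0 δ) (Ioo 0 r) := fun t ht => by
    have : 0 < r / δ := by positivity
    refine ⟨mul_pos ht.1 this, ?_⟩
    calc t * (r / δ) < δ * (r / δ) := by gcongr; exact ht.2
      _ = r := by field_simp
  refine ⟨0, δ, fun t => h (t * (r / δ)), δ0, ?_, ?_, ?_⟩
  · exact H.hc.comp (by fun_prop) (fun t ht => hsub (hm ht))
  · intro s hs t ht e
    have := H.inj (hsub (hm hs)) (hsub (hm ht)) e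
    exact mul_right_cancel₀ (by positivity) this
  · rw [sub_zero]
    refine hδ.le.trans (wt_mono ?_)
    clear_value δ
    rintro _ ⟨y, hy, rfl⟩
    refine ⟨y * (δ / r), ⟨?_, ?_⟩, ?_⟩
    · exact mul_pos hy.1 (by positivity)
    · calc y * (δ / r) < r * (δ / r) := by gcongr; exact hy.2
        _ = δ := by field_simp
    · simp only; congr 1; field_simp

/-- Zorn -/
theorem exists_max [SecondCountableTopology X] [Nonempty X] [ChartedSpace (EuclideanHalfSpace 1) X] :
    ∃ a b, ∃ g : ℝ → X, Arc a b g ∧ ∀ a' b' g', Arc a' b' g' → a' ≤ a → b ≤ b' →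
      EqOn g g' (Ioo a b) → a' = a ∧ b' = b := by
  classical
  let T := {x : ℝ × ℝ × (ℝ → X) // Arc x.1 x.2.1 x.2.2}
  let R : T → T → Prop := fun x y => y.1.1 ≤ x.1.1 ∧ x.1.2.1 ≤ y.1.2.1 ∧
    EqOn x.1.2.2 y.1.2.2 (Ioo x.1.1 x.1.2.1)
  have Rrefl : ∀ x, R x x := fun x => ⟨le_rfl, le_rfl, fun _ _ => rfl⟩
  have Rtrans : ∀ {x y z}, R x y → R y z → R x z := fun {x y z} h1 h2 =>
    ⟨h2.1.trans h1.1, h1.2.1.trans h2.2.1, fun t ht =>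
      (h1.2.2 ht).trans (h2.2.2 (Ioo_subset_Ioo h1.1 h1.2.1 ht))⟩
  obtain ⟨a0, b0, g0, A0⟩ := exists_arc (X := X)
  have : Nonempty T := ⟨⟨(a0, b0, g0), A0⟩⟩
  have hz := exists_maximal_of_nonempty_chains_bounded (r := R) ?_ Rtrans
  · obtain ⟨⟨⟨a, b, g⟩, A⟩, hmax⟩ := hz
    refine ⟨a, b, g, A, ?_⟩
    intro a' b' g' A' h1 h2 h3
    have := hmax ⟨(a', b', g'), A'⟩ ⟨h1, h2, h3⟩
    exact ⟨le_antisymm h1 this.1, le_antisymm this.2.1 h2⟩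
  · intro C hC hne
    obtain ⟨c0, hc0⟩ := hne
    have dir : ∀ x ∈ C, ∀ y ∈ C, ∃ z ∈ C, R x z ∧ R y z := by
      intro x hx y hy
      rcases eq_or_ne x y with rfl | hxy
      · exact ⟨x, hx, Rrefl x, Rrefl x⟩
      · rcases hC hx hy hxy with h | h
        · exact ⟨y, hy, h, Rrefl y⟩
        · exact ⟨x, hx, Rrefl x, h⟩
    set M := wt (univ : Set X) with hM
    have len : ∀ x ∈ C, ∀ y ∈ C, x.1.2.1 - y.1.1 ≤ M := by
      intro x hx y hy
      obtain ⟨z, hz, h1, h2⟩ := dir x hx y hy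
      have h3 := z.2.w
      have h4 := wt_mono (subset_univ (z.1.2.2 '' Ioo z.1.1 z.1.2.1))
      linarith [h1.2.1, h2.1]
    set AA : Set ℝ := (fun x : T => x.1.1) '' C with hAA
    set BB : Set ℝ := (fun x : T => x.1.2.1) '' C with hBB
    have hAb : BddBelow AA := ⟨c0.1.2.1 - M, by
      rintro _ ⟨x, hx, rfl⟩; linarith [len c0 hc0 x hx]⟩
    have hBb : BddAbove BB := ⟨c0.1.1 + M, by
      rintro _ ⟨x, hx, rfl⟩; linarith [len x hx c0 hc0]⟩
    have hAn : AA.Nonempty := ⟨_, c0, hc0, rfl⟩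
    have hBn : BB.Nonempty := ⟨_, c0, hc0, rfl⟩
    set a := sInf AA with ha
    set b := sSup BB with hb
    have hal : ∀ x ∈ C, a ≤ x.1.1 := fun x hx => csInf_le hAb ⟨x, hx, rfl⟩
    have hbl : ∀ x ∈ C, x.1.2.1 ≤ b := fun x hx => le_csSup hBb ⟨x, hx, rfl⟩
    have cover : ∀ s t, s ∈ Ioo a b → t ∈ Ioo a b → ∃ z ∈ C, s ∈ Ioo z.1.1 z.1.2.1 ∧ t ∈ Ioo z.1.1 z.1.2.1 := by
      have c1 : ∀ s ∈ Ioo a b, ∃ z ∈ C, s ∈ Ioo z.1.1 z.1.2.1 := by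
        intro s hs
        obtain ⟨_, ⟨x, hx, rfl⟩, hx'⟩ := exists_lt_of_csInf_lt hAn hs.1
        obtain ⟨_, ⟨y, hy, rfl⟩, hy'⟩ := exists_lt_of_lt_csSup hBn hs.2
        obtain ⟨z, hz, h1, h2⟩ := dir x hx y hy
        exact ⟨z, hz, h1.1.trans_lt hx', hy'.trans_le h2.2.1⟩
      intro s t hs ht
      obtain ⟨x, hx, hx'⟩ := c1 s hs
      obtain ⟨y, hy, hy'⟩ := c1 t ht
      obtain ⟨z, hz, h1, h2⟩ := dir x hx y hy
      exact ⟨z, hz, Ioo_subset_Ioo h1.1 h1.2.1 hx', Ioo_subset_Ioo h2.1 h2.2.1 hy'⟩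
    set g : ℝ → X := fun t => if ht : ∃ z ∈ C, t ∈ Ioo z.1.1 z.1.2.1 then ht.choose.1.2.2 t
      else Classical.arbitrary X with hg
    have hgz : ∀ z ∈ C, EqOn z.1.2.2 g (Ioo z.1.1 z.1.2.1) := by
      intro z hz t ht
      have hex : ∃ z ∈ C, t ∈ Ioo z.1.1 z.1.2.1 := ⟨z, hz, ht⟩
      have e : g t = hex.choose.1.2.2 t := by simp only [hg]; rw [dif_pos hex]
      obtain ⟨h1, h2⟩ := hex.choose_spec
      obtain ⟨w, hw, h3, h4⟩ := dir z hz _ h1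
      rw [e, h3.2.2 ht, h4.2.2 h2]
    have hsubz : ∀ z ∈ C, Ioo z.1.1 z.1.2.1 ⊆ Ioo a b := fun z hz => Ioo_subset_Ioo (hal z hz) (hbl z hz)
    have wz : ∀ z ∈ C, wt (z.1.2.2 '' Ioo z.1.1 z.1.2.1) ≤ wt (g '' Ioo a b) := by
      intro z hz
      apply wt_mono
      rw [(hgz z hz).image_eq]
      exact image_mono (hsubz z hz)
    have HA : Arc a b g := by
      refine ⟨((hal c0 hc0).trans_lt c0.2.lt).trans_le (hbl c0 hc0), ?_, ?_, ?_⟩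
      · intro t ht
        obtain ⟨z, hz, ht', -⟩ := cover t t ht ht
        apply ContinuousAt.continuousWithinAt
        exact ((z.2.c.congr (hgz z hz).symm)).continuousAt (isOpen_Ioo.mem_nhds ht')
      · intro s hs t ht e
        obtain ⟨z, hz, hs', ht'⟩ := cover s t hs ht
        rw [← hgz z hz hs', ← hgz z hz ht'] at e
        exact z.2.i hs' ht' e
      · have : b ≤ a + wt (g '' Ioo a b) := by
          apply csSup_le hBn
          rintro _ ⟨x, hx, rfl⟩
          have : x.1.2.1 - wt (g '' Ioo a b) ≤ a := by
            apply le_csInf hAn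
            rintro _ ⟨y, hy, rfl⟩
            obtain ⟨z, hz, h1, h2⟩ := dir x hx y hy
            have := z.2.w
            simp only
            linarith [h1.2.1, h2.1, wz z hz]
          simp only
          linarith
        linarith
    exact ⟨⟨(a, b, g), HA⟩, fun z hz => ⟨hal z hz, hbl z hz, hgz z hz⟩⟩

theorem mkHomeo {J : Set ℝ} {G : ℝ → X} (Gc : ContinuousOn G J) (Gi : InjOn G J)
    (Gs : G '' J = univ) (Go : ∀ t ∈ J, ∀ ε > 0, G '' (J ∩ Ioo (t - ε) (t + ε)) ∈ 𝓝 (G t)) :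
    Nonempty (X ≃ₜ J) := by
  have hop : IsOpenMap (J.domRestrict G) := by
    rw [isOpenMap_iff_nhds_le]
    rintro ⟨t, ht⟩ N hN
    rw [mem_map, nhds_subtype_eq_comap, mem_comap] at hN
    obtain ⟨M, hM, hs⟩ := hN
    obtain ⟨ε, he, hb⟩ := Metric.mem_nhds_iff.1 hM
    rw [Real.ball_eq_Ioo] at hb
    refine mem_of_superset (Go t ht ε he) ?_
    rintro _ ⟨s, ⟨hsJ, hs'⟩, rfl⟩
    exact hs (a := ⟨s, hsJ⟩) (hb hs')
  have hbij : Function.Bijective (J.domRestrict G) :=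
    ⟨injOn_iff_injective.1 Gi, by
      rw [← range_eq_univ, range_domRestrict, Gs]⟩
  exact ⟨((IsHomeomorph.mk Gc.domRestrict hop hbij).homeomorph).symm⟩

theorem Arc.nhds_sub [SecondCountableTopology X] [Nonempty X] [ChartedSpace (EuclideanHalfSpace 1) X]
    {a b : ℝ} {g : ℝ → X} (A : Arc a b g) {t : ℝ} (ht : t ∈ Ioo a b) {ε : ℝ} (he : 0 < ε) :
    g '' (Ioo a b ∩ Ioo (t - ε) (t + ε)) ∈ 𝓝 (g t) := by
  rw [Ioo_inter_Ioo]
  have hs : Ioo (a ⊔ (t - ε)) (b ⊓ (t + ε)) ⊆ Ioo a b := Ioo_subset_Ioo le_sup_left inf_le_left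
  refine image_nhds (A.c.mono hs) (A.i.mono hs) ⟨sup_lt_iff.2 ⟨ht.1, by linarith⟩, lt_inf_iff.2 ⟨ht.2, by linarith⟩⟩

theorem ext_one {a b : ℝ} {g : ℝ → X} (hab : a < b) (gc : ContinuousOn g (Ioo a b)) {p : X}
    (hl : Tendsto g (𝓝[<] b) (𝓝 p)) :
    ∃ G : ℝ → X, ContinuousOn G (Ioc a b) ∧ EqOn g G (Ioo a b) ∧ G b = p := by
  classical
  refine ⟨Function.update g b p, ?_, ?_, by simp⟩
  · rw [continuousOn_update_iff, Ioc_sdiff_right]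
    refine ⟨gc, fun _ => ?_⟩
    rwa [nhdsWithin_Ioo_eq_nhdsLT hab]
  · intro t ht
    rw [Function.update_of_ne ht.2.ne]

theorem ext_two {a b : ℝ} {g : ℝ → X} (hab : a < b) (gc : ContinuousOn g (Ioo a b)) {p q : X}
    (hl : Tendsto g (𝓝[<] b) (𝓝 p)) (hl' : Tendsto (fun t => g (-t)) (𝓝[<] (-a)) (𝓝 q)) :
    ∃ G : ℝ → X, ContinuousOn G (Icc a b) ∧ EqOn g G (Ioo a b) ∧ G a = q ∧ G b = p := by
  classical
  obtain ⟨G, Gc, Ge, Gb⟩ := ext_one hab gc hl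
  have hl2 : Tendsto g (𝓝[>] a) (𝓝 q) := by
    have h := hl'.comp (tendsto_neg_nhdsGT (a := a))
    simpa [Function.comp_def] using h
  refine ⟨Function.update G a q, ?_, ?_, by simp, ?_⟩
  · rw [continuousOn_update_iff, Icc_sdiff_left]
    refine ⟨Gc, fun _ => ?_⟩
    rw [nhdsWithin_Ioc_eq_nhdsGT hab]
    refine hl2.congr' ?_
    filter_upwards [Ioo_mem_nhdsGT hab] with t ht using Ge ht
  · intro t ht
    rw [Function.update_of_ne ht.1.ne']; exact Ge ht
  · rw [Function.update_of_ne hab.ne']; exact Gb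

theorem Icc_split {a b : ℝ} (hab : a < b) : Icc a b = insert a (insert b (Ioo a b)) := by
  rw [Ioo_insert_right hab, Ioc_insert_left hab.le]

/-- a two-sided end at one point gives a circle -/
theorem circle_case [T2Space X] [ConnectedSpace X] {a b : ℝ} {g : ℝ → X} (hab : a < b)
    (gc : ContinuousOn g (Ioo a b)) (gi : InjOn g (Ioo a b)) (go : IsOpen (g '' Ioo a b)) {p : X}
    (hp : p ∉ g '' Ioo a b)
    (hl : Tendsto g (𝓝[<] b) (𝓝 p)) (hl' : Tendsto (fun t => g (-t)) (𝓝[<] (-a)) (𝓝 p))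
    (hn : insert p (g '' Ioo a b) ∈ 𝓝 p) : Nonempty (X ≃ₜ Circle) := by
  obtain ⟨G, Gc, Ge, Ga, Gb⟩ := ext_two hab gc hl hl'
  have him : G '' Icc a b = insert p (g '' Ioo a b) := by
    rw [Icc_split hab, image_insert_eq, image_insert_eq, Ga, Gb, Ge.image_eq, insert_idem]
  have hun : G '' Icc a b = univ := by
    apply IsClopen.eq_univ
    · refine ⟨(isCompact_Icc.image_of_continuousOn Gc).isClosed, ?_⟩
      rw [him, isOpen_iff_mem_nhds]
      rintro x (rfl | hx)
      · exact hn
      · exact mem_of_superset (go.mem_nhds hx) (subset_insert _ _)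
    · exact ⟨_, a, ⟨le_rfl, hab.le⟩, rfl⟩
  have : Fact (0 < b - a) := ⟨by linarith⟩
  have hab' : a + (b - a) = b := by ring
  let F : AddCircle (b - a) → X := AddCircle.liftIco (b - a) a G
  have Fc : Continuous F := by
    apply AddCircle.liftIco_continuous
    · rw [hab', Ga, Gb]
    · rw [hab']; exact Gc
  have Fco : ∀ t ∈ Ico a b, F (t : AddCircle (b - a)) = G t := fun t ht =>
    AddCircle.liftIco_coe_apply (by rwa [hab'])
  have hrep : ∀ x : AddCircle (b - a), ∃ t ∈ Ico a b, (t : AddCircle (b - a)) = x := by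
    intro x
    obtain ⟨t, ht, e⟩ := (AddCircle.coe_image_Ico_eq (b - a) a).symm.subset (mem_univ x)
    exact ⟨t, by rwa [hab'] at ht, e⟩
  have Gi : InjOn G (Ico a b) := by
    intro s hs t ht e
    rcases hs.1.eq_or_lt with rfl | h1 <;> rcases ht.1.eq_or_lt with h2 | h2
    · exact h2
    · rw [Ga, ← Ge ⟨h2, ht.2⟩] at e
      exact (hp ⟨t, ⟨h2, ht.2⟩, e.symm⟩).elim
    · rw [← h2, Ga, ← Ge ⟨h1, hs.2⟩] at e
      exact (hp ⟨s, ⟨h1, hs.2⟩, e⟩).elim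
    · rw [← Ge ⟨h1, hs.2⟩, ← Ge ⟨h2, ht.2⟩] at e
      exact gi ⟨h1, hs.2⟩ ⟨h2, ht.2⟩ e
  have Fb : Function.Bijective F := by
    constructor
    · intro x y e
      obtain ⟨s, hs, rfl⟩ := hrep x
      obtain ⟨t, ht, rfl⟩ := hrep y
      rw [Fco s hs, Fco t ht] at e
      rw [Gi hs ht e]
    · intro x
      obtain ⟨t, ht, rfl⟩ := hun.symm.subset (mem_univ x)
      rcases ht.2.eq_or_lt with rfl | h
      · exact ⟨_, by rw [Gb, ← Ga]; exact Fco a ⟨le_rfl, hab⟩⟩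
      · exact ⟨_, Fco t ⟨ht.1, h⟩⟩
  have e1 : AddCircle (b - a) ≃ₜ X :=
    Continuous.homeoOfEquivCompactToT2 (f := Equiv.ofBijective F Fb) Fc
  exact ⟨e1.symm.trans (AddCircle.homeomorphCircle (by linarith [this.out]))⟩

theorem interior_end [T2Space X] [ConnectedSpace X] [SecondCountableTopology X] [Nonempty X]
    [ChartedSpace (EuclideanHalfSpace 1) X] {a b : ℝ} {g : ℝ → X} (A : Arc a b g)
    (hmax : ∀ b' g', Arc a b' g' → b < b' → EqOn g g' (Ioo a b) → False) {p : X}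
    (hp : p ∉ g '' Ioo a b) (hl : Tendsto g (𝓝[<] b) (𝓝 p))
    {h : ℝ → X} {k : X → ℝ} {r : ℝ} (H : IsCh p h k r (Ioo (-r) r)) : Nonempty (X ≃ₜ Circle) := by
  have hab := A.lt
  have r0 := H.rpos
  obtain ⟨σ, hσ, hs1, hs2⟩ := end_sign hab A.c hp H hl
  have hσ2 : σ * σ = 1 := by rcases hσ with rfl | rfl <;> norm_num
  have hmem : ∀ y, |y| < r → σ * y ∈ Ioo (-r) r := fun y hy => by
    rw [abs_lt] at hy
    rcases hσ with rfl | rfl <;> constructor <;> linarith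
  -- points on the other side
  set B : Set X := g '' Ioo a b ∩ {x | x ∈ h '' Ioo (-r) r ∧ σ * k x < 0} with hB
  have hpB : p ∈ closure B := by
    by_contra hcon
    obtain ⟨δ, δ0, δr, hδ⟩ := H.small (isClosed_closure.isOpen_compl.mem_nhds hcon)
    have hmem' : ∀ s ∈ Ico (0:ℝ) 1, σ * (-(s * δ)) ∈ Ioo (-r) r := fun s hs => hmem _ (by
      rw [abs_neg, abs_of_nonneg (mul_nonneg hs.1 δ0.le)]
      nlinarith [hs.1, hs.2])
    have hnot : ∀ s ∈ Ioo (0:ℝ) 1, h (σ * (-(s * δ))) ∉ g '' Ioo a b := by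
      intro s hs hmemU
      have hm := hmem' s ⟨hs.1.le, hs.2⟩
      have hsd : 0 < s * δ := mul_pos hs.1 δ0
      have hsd' : s * δ < δ := by nlinarith [hs.2]
      apply hδ (a := h (σ * (-(s * δ))))
      · refine ⟨_, ⟨hm, ?_⟩, rfl⟩
        rcases hσ with rfl | rfl <;> constructor <;> linarith
      · apply subset_closure
        refine ⟨hmemU, ⟨_, hm, rfl⟩, ?_⟩
        rw [H.inv _ hm, ← mul_assoc, hσ2]; linarith
    have hσ0 : σ ≠ 0 := by rintro rfl; norm_num at hσ2
    have hq0 : h (σ * (-(0 * δ))) = p := by simp [H.h0]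
    have hqc : ContinuousOn (fun s => h (σ * (-(s * δ)))) (Ico 0 1) :=
      H.hc.comp (by fun_prop) hmem'
    have hqi : InjOn (fun s => h (σ * (-(s * δ)))) (Ico 0 1) := by
      intro s hs t ht e
      have := H.inj (hmem' s hs) (hmem' t ht) e
      have := mul_left_cancel₀ hσ0 this
      exact mul_right_cancel₀ δ0.ne' (neg_injective this)
    have hqd : Disjoint (g '' Ioo a b) ((fun s => h (σ * (-(s * δ)))) '' Ico 0 1) := by
      rw [disjoint_right]
      rintro _ ⟨s, hs, rfl⟩
      rcases hs.1.eq_or_lt with rfl | h0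
      · simp only [hq0]; exact hp
      · exact hnot s ⟨h0, hs.2⟩
    have hO : IsOpen (h '' (Ioo (-r) r ∩ (fun y => - (σ * y) / δ) ⁻¹' Ioo 0 1)) :=
      H.openIm (isOpen_Ioo.preimage (by fun_prop))
    obtain ⟨b', g', h1, h2, h3⟩ := A.ext hqc hqi (by simp only [hq0]; exact hl) hqd hO
      ⟨_, σ * (-(1/2 * δ)), ⟨hmem' _ (by norm_num), by
        simp only [mem_preimage]
        rw [← mul_assoc, hσ2]
        have : -(1 * -(1/2 * δ)) / δ = 1/2 := by field_simp
        rw [this]; norm_num⟩, rfl⟩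
      (by
        rintro _ ⟨y, ⟨hy, hy'⟩, rfl⟩
        refine ⟨- (σ * y) / δ, ⟨hy'.1.le, hy'.2⟩, ?_⟩
        simp only
        congr 1
        field_simp
        linear_combination y * hσ2)
    exact hmax b' g' h2 h1 h3
  have hcl : ∀ N ∈ 𝓝 p, ∃ᶠ t in 𝓝[<] (-a), g (-t) ∈ N := by
    rcases cluster_of_closure A.c hp inter_subset_left hpB with hc | hc
    · exfalso
      obtain ⟨t, ht, ht'⟩ := ((hc univ univ_mem).and_eventually hs1).exists
      have := ht.2.2.2
      linarith [ht'.2]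
    · intro N hN
      exact (hc N hN).mono fun t ht => ht.1
  have hl' := limit_of_cluster (neg_lt_neg hab) A.neg.c A.neg.i H hcl
  obtain ⟨τ, hτ, -, ht2⟩ := end_sign (neg_lt_neg hab) A.neg.c (by rwa [image_neg']) H hl'
  obtain ⟨c, hc⟩ := exists_between hab
  obtain ⟨η, η0, hη⟩ := hs2 c hc.1.le hc.2
  obtain ⟨ξ, ξ0, hξ⟩ := ht2 (-c) (by linarith) (by linarith)
  rw [image_neg'] at hξ
  set m := min η ξ
  have m0 : 0 < m := lt_min η0 ξ0
  have hne : τ = -σ := by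
    by_contra hcon
    have : τ = σ := by rcases hσ with rfl | rfl <;> rcases hτ with rfl | rfl <;> simp_all
    subst this
    obtain ⟨s, hs, e⟩ := hη (m/2) (by linarith) (by linarith [min_le_left η ξ])
    obtain ⟨t, ht, e'⟩ := hξ (m/2) (by linarith) (by linarith [min_le_right η ξ])
    have := A.i ⟨hc.1.trans hs.1, hs.2⟩ ⟨ht.1, ht.2.trans hc.2⟩ (e.trans e'.symm)
    linarith [hs.1, ht.2]
  refine circle_case hab A.c A.i ?_ hp hl hl' ?_
  · rw [isOpen_iff_mem_nhds]
    rintro _ ⟨t, ht, rfl⟩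
    exact image_nhds A.c A.i ht
  · refine mem_of_superset (H.nhd m0) ?_
    rintro _ ⟨y, ⟨hy, hy'⟩, rfl⟩
    have k1 : Ioo c b ⊆ Ioo a b := Ioo_subset_Ioo_left hc.1.le
    have k2 : Ioo a c ⊆ Ioo a b := Ioo_subset_Ioo_right hc.2.le
    have ey : y = σ * (σ * y) := by rw [← mul_assoc, hσ2, one_mul]
    have ey' : y = τ * (-(σ * y)) := by rw [hne]; linear_combination - y * hσ2
    have hab' : |σ * y| < m := by
      rw [abs_lt]; rcases hσ with rfl | rfl <;> constructor <;> linarith [hy'.1, hy'.2]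
    rw [abs_lt] at hab'
    rcases lt_trichotomy (σ * y) 0 with hh | hh | hh
    · right
      rw [ey']
      exact image_mono k2 (hξ _ (by linarith) (by linarith [min_le_right η ξ]))
    · left
      rw [hh, mul_zero] at ey
      rw [ey, H.h0]
    · right
      rw [ey]
      exact image_mono k1 (hη _ hh (by linarith [min_le_left η ξ]))

theorem boundary_end {a b : ℝ} {g : ℝ → X} (hab : a < b) (gc : ContinuousOn g (Ioo a b)) {p : X}
    (hp : p ∉ g '' Ioo a b) (hl : Tendsto g (𝓝[<] b) (𝓝 p))
    {h : ℝ → X} {k : X → ℝ} {r : ℝ} (H : IsCh p h k r (Ico 0 r)) {c : ℝ} (hc : a ≤ c) (hcb : c < b) :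
    insert p (g '' Ioo c b) ∈ 𝓝 p := by
  obtain ⟨σ, hσ, hs1, hs2⟩ := end_sign hab gc hp H hl
  have hσ1 : σ = 1 := by
    obtain ⟨t, ht, ht'⟩ := hs1.exists
    have := (H.hk ht).2.1
    rcases hσ with e | e
    · exact e
    · rw [e] at ht'; linarith
  subst hσ1
  obtain ⟨η, η0, hη⟩ := hs2 c hc hcb
  refine mem_of_superset (H.nhd η0) ?_
  rintro _ ⟨y, ⟨hy, hy'⟩, rfl⟩
  rcases hy.1.eq_or_lt with h0 | h0
  · left; rw [← h0, H.h0]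
  · right; simpa using hη y h0 hy'.2

theorem Ioc_homeo {a b : ℝ} (hab : a < b) : Nonempty (Ioc a b ≃ₜ Ici (0:ℝ)) := by
  refine ⟨{ toFun := fun t => ⟨(b - t.1) / (t.1 - a), div_nonneg (sub_nonneg.2 t.2.2) (sub_nonneg.2 t.2.1.le)⟩
            invFun := fun s => ⟨(b + s.1 * a) / (1 + s.1), ?_⟩
            left_inv := ?_, right_inv := ?_, continuous_toFun := ?_, continuous_invFun := ?_ }⟩
  · have hs : 0 ≤ s.1 := s.2
    have h1 : 0 < 1 + s.1 := by linarith
    constructor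
    · rw [lt_div_iff₀ h1]; linarith
    · rw [div_le_iff₀ h1]; nlinarith
  · rintro ⟨t, ht⟩
    have h1 : t - a ≠ 0 := by linarith [ht.1]
    have h2 : t - a + (b - t) ≠ 0 := by linarith [ht.1]
    ext
    simp only
    rw [div_eq_iff (by rw [← div_self h1, ← add_div]; exact div_ne_zero h2 h1)]
    field_simp
    ring
  · rintro ⟨s, hs⟩
    have hs : 0 ≤ s := hs
    have h1 : 1 + s ≠ 0 := by linarith
    have h3 : (b + s * a) / (1 + s) - a ≠ 0 := by
      have : (b + s * a) / (1 + s) - a = (b - a) / (1 + s) := by field_simp; ring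
      rw [this]; exact div_ne_zero (by linarith) h1
    ext
    simp only
    rw [div_eq_iff h3]
    field_simp
    ring
  · refine Continuous.subtype_mk ?_ _
    exact Continuous.div (by fun_prop) (by fun_prop) fun t => by linarith [t.2.1]
  · refine Continuous.subtype_mk ?_ _
    exact Continuous.div (by fun_prop) (by fun_prop) fun t => by
      have : 0 ≤ t.1 := t.2
      linarith

theorem Ioo_homeo {a b : ℝ} (hab : a < b) : Nonempty (Ioo a b ≃ₜ ℝ) := by
  have : Nonempty (Ioo a b ≃ₜ Ioi (0:ℝ)) := by
    refine ⟨{ toFun := fun t => ⟨(b - t.1) / (t.1 - a), div_pos (sub_pos.2 t.2.2) (sub_pos.2 t.2.1)⟩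
              invFun := fun s => ⟨(b + s.1 * a) / (1 + s.1), ?_⟩
              left_inv := ?_, right_inv := ?_, continuous_toFun := ?_, continuous_invFun := ?_ }⟩
    · have hs : 0 < s.1 := s.2
      have h1 : 0 < 1 + s.1 := by linarith
      constructor
      · rw [lt_div_iff₀ h1]; linarith
      · rw [div_lt_iff₀ h1]; nlinarith
    · rintro ⟨t, ht⟩
      have h1 : t - a ≠ 0 := by linarith [ht.1]
      have h2 : t - a + (b - t) ≠ 0 := by linarith [ht.1]
      ext
      simp only
      rw [div_eq_iff (by rw [← div_self h1, ← add_div]; exact div_ne_zero h2 h1)]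
      field_simp
      ring
    · rintro ⟨s, hs⟩
      have hs : 0 < s := hs
      have h1 : 1 + s ≠ 0 := by linarith
      have h3 : (b + s * a) / (1 + s) - a ≠ 0 := by
        have : (b + s * a) / (1 + s) - a = (b - a) / (1 + s) := by field_simp; ring
        rw [this]; exact div_ne_zero (by linarith) h1
      ext
      simp only
      rw [div_eq_iff h3]
      field_simp
      ring
    · refine Continuous.subtype_mk ?_ _
      exact Continuous.div (by fun_prop) (by fun_prop) fun t => by linarith [t.2.1]
    · refine Continuous.subtype_mk ?_ _
      exact Continuous.div (by fun_prop) (by fun_prop) fun t => by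
        have : 0 < t.1 := t.2
        linarith
  obtain ⟨e⟩ := this
  exact ⟨e.trans Real.expOrderIso.toHomeomorph.symm⟩

theorem Arc.isOpen [SecondCountableTopology X] [Nonempty X] [ChartedSpace (EuclideanHalfSpace 1) X]
    {a b : ℝ} {g : ℝ → X} (A : Arc a b g) : IsOpen (g '' Ioo a b) := by
  rw [isOpen_iff_mem_nhds]
  rintro _ ⟨t, ht, rfl⟩
  exact image_nhds A.c A.i ht

theorem Arc.closure_lim [T2Space X] [SecondCountableTopology X] [Nonempty X]
    [ChartedSpace (EuclideanHalfSpace 1) X] {a b : ℝ} {g : ℝ → X} (A : Arc a b g) {x : X}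
    (hx : x ∈ closure (g '' Ioo a b)) (hx' : x ∉ g '' Ioo a b) :
    Tendsto g (𝓝[<] b) (𝓝 x) ∨ Tendsto (fun t => g (-t)) (𝓝[<] (-a)) (𝓝 x) := by
  obtain ⟨h, k, r, S, H⟩ := exists_ch x
  rcases cluster_of_closure A.c hx' le_rfl hx with hc | hc
  · exact Or.inl (limit_of_cluster A.lt A.c A.i H fun N hN => (hc N hN).mono fun t ht => ht.1)
  · exact Or.inr (limit_of_cluster A.neg.lt A.neg.c A.neg.i H fun N hN =>
      (hc N hN).mono fun t ht => ht.1)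

/-- only a right end -/
theorem one_end [T2Space X] [ConnectedSpace X] [SecondCountableTopology X] [Nonempty X]
    [ChartedSpace (EuclideanHalfSpace 1) X] {a b : ℝ} {g : ℝ → X} (A : Arc a b g) {p : X}
    (hp : p ∉ g '' Ioo a b) (hl : Tendsto g (𝓝[<] b) (𝓝 p))
    (hn : ∀ c, a ≤ c → c < b → insert p (g '' Ioo c b) ∈ 𝓝 p)
    (hno : ∀ q, q ∉ g '' Ioo a b → ¬ Tendsto (fun t => g (-t)) (𝓝[<] (-a)) (𝓝 q)) :
    Nonempty (X ≃ₜ Ici (0:ℝ)) := by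
  have hab := A.lt
  obtain ⟨G, Gc, Ge, Gb⟩ := ext_one hab A.c hl
  have him : G '' Ioc a b = insert p (g '' Ioo a b) := by
    rw [← Ioo_insert_right hab, image_insert_eq, Gb, Ge.image_eq]
  have hun : G '' Ioc a b = univ := by
    rw [him]
    apply IsClopen.eq_univ
    · constructor
      · rw [← closure_subset_iff_isClosed, insert_eq, closure_union, closure_singleton, ← insert_eq]
        rintro x (rfl | hx)
        · exact mem_insert _ _
        · by_cases hx' : x ∈ g '' Ioo a b
          · exact Or.inr hx'
          · rcases A.closure_lim hx hx' with h | h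
            · left; exact tendsto_nhds_unique h hl
            · exact (hno x hx' h).elim
      · rw [isOpen_iff_mem_nhds]
        rintro x (rfl | hx)
        · exact hn a le_rfl hab
        · exact mem_of_superset (A.isOpen.mem_nhds hx) (subset_insert _ _)
    · exact ⟨p, mem_insert _ _⟩
  have : Nonempty (X ≃ₜ Ioc a b) := by
    refine mkHomeo Gc ?_ hun ?_
    · intro s hs t ht e
      rcases hs.2.eq_or_lt with h1 | h1 <;> rcases ht.2.eq_or_lt with h2 | h2
      · rw [h1, h2]
      · rw [h1, Gb, ← Ge ⟨ht.1, h2⟩] at e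
        exact (hp ⟨t, ⟨ht.1, h2⟩, e.symm⟩).elim
      · rw [h2, Gb, ← Ge ⟨hs.1, h1⟩] at e
        exact (hp ⟨s, ⟨hs.1, h1⟩, e⟩).elim
      · rw [← Ge ⟨hs.1, h1⟩, ← Ge ⟨ht.1, h2⟩] at e
        exact A.i ⟨hs.1, h1⟩ ⟨ht.1, h2⟩ e
    · intro t ht ε he
      rcases ht.2.eq_or_lt with h1 | h1
      · subst h1
        rw [Gb]
        refine mem_of_superset (hn (max a (t - ε)) (le_max_left _ _) (max_lt hab (by linarith))) ?_
        rintro x (rfl | ⟨s, hs, rfl⟩)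
        · exact ⟨t, ⟨ht, by constructor <;> linarith⟩, Gb⟩
        · have h1 := (le_max_left a (t - ε)).trans_lt hs.1
          have h2 := (le_max_right a (t - ε)).trans_lt hs.1
          exact ⟨s, ⟨⟨h1, hs.2.le⟩, h2, by linarith [hs.2]⟩, (Ge ⟨h1, hs.2⟩).symm⟩
      · rw [← Ge ⟨ht.1, h1⟩]
        refine mem_of_superset (A.nhds_sub ⟨ht.1, h1⟩ he) ?_
        rintro _ ⟨s, ⟨hs, hs'⟩, rfl⟩
        exact ⟨s, ⟨⟨hs.1, hs.2.le⟩, hs'⟩, (Ge hs).symm⟩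
  obtain ⟨e⟩ := this
  obtain ⟨e'⟩ := Ioc_homeo hab
  exact ⟨e.trans e'⟩

theorem two_ends [T2Space X] [ConnectedSpace X] [SecondCountableTopology X] [Nonempty X]
    [ChartedSpace (EuclideanHalfSpace 1) X] {a b : ℝ} {g : ℝ → X} (A : Arc a b g) {p q : X}
    (hp : p ∉ g '' Ioo a b) (hl : Tendsto g (𝓝[<] b) (𝓝 p))
    (hn : ∀ c, a ≤ c → c < b → insert p (g '' Ioo c b) ∈ 𝓝 p)
    (hq : q ∉ g '' Ioo a b) (hl' : Tendsto (fun t => g (-t)) (𝓝[<] (-a)) (𝓝 q))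
    (hn' : ∀ c, a < c → c ≤ b → insert q (g '' Ioo a c) ∈ 𝓝 q) :
    Nonempty (X ≃ₜ Icc (0:ℝ) 1) := by
  have hab := A.lt
  have hpq : p ≠ q := by
    rintro rfl
    obtain ⟨c, hc⟩ := exists_between hab
    have h1 := inter_mem (hn c hc.1.le hc.2) (hn' c hc.1 hc.2.le)
    obtain ⟨t, ⟨ht, ht'⟩, hti⟩ := ((hl.eventually h1).and (Ioo_mem_nhdsLT hab)).exists
    rcases ht with e | ⟨u, hu, e⟩
    · exact hp ⟨t, hti, e⟩
    rcases ht' with e' | ⟨v, hv, e'⟩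
    · exact hp ⟨t, hti, e'⟩
    have := A.i ⟨hc.1.trans hu.1, hu.2⟩ ⟨hv.1, hv.2.trans hc.2⟩ (e.trans e'.symm)
    linarith [hu.1, hv.2]
  obtain ⟨G, Gc, Ge, Ga, Gb⟩ := ext_two hab A.c hl hl'
  have him : G '' Icc a b = insert q (insert p (g '' Ioo a b)) := by
    rw [Icc_split hab, image_insert_eq, image_insert_eq, Ga, Gb, Ge.image_eq]
  have hun : G '' Icc a b = univ := by
    apply IsClopen.eq_univ
    · refine ⟨(isCompact_Icc.image_of_continuousOn Gc).isClosed, ?_⟩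
      rw [him, isOpen_iff_mem_nhds]
      rintro x (rfl | rfl | hx)
      · exact mem_of_superset (hn' b hab le_rfl) (insert_subset_insert (subset_insert _ _))
      · exact mem_of_superset (hn a le_rfl hab) (subset_insert _ _)
      · exact mem_of_superset (A.isOpen.mem_nhds hx) ((subset_insert _ _).trans (subset_insert _ _))
    · exact ⟨_, a, ⟨le_rfl, hab.le⟩, rfl⟩
  have Gi : InjOn G (Icc a b) := by
    intro s hs t ht e
    rw [Icc_split hab] at hs ht
    rcases hs with hs | hs | hs <;> rcases ht with ht | ht | ht
    · rw [hs, ht]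
    · rw [hs, ht, Ga, Gb] at e; exact (hpq e.symm).elim
    · rw [hs, Ga, ← Ge ht] at e; exact (hq ⟨t, ht, e.symm⟩).elim
    · rw [hs, ht, Ga, Gb] at e; exact (hpq e).elim
    · rw [hs, ht]
    · rw [hs, Gb, ← Ge ht] at e; exact (hp ⟨t, ht, e.symm⟩).elim
    · rw [ht, Ga, ← Ge hs] at e; exact (hq ⟨s, hs, e⟩).elim
    · rw [ht, Gb, ← Ge hs] at e; exact (hp ⟨s, hs, e⟩).elim
    · rw [← Ge hs, ← Ge ht] at e; exact A.i hs ht e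
  have hbij : Function.Bijective ((Icc a b).domRestrict G) :=
    ⟨injOn_iff_injective.1 Gi, by rw [← range_eq_univ, range_domRestrict, hun]⟩
  have e1 : Icc a b ≃ₜ X :=
    Continuous.homeoOfEquivCompactToT2 (f := Equiv.ofBijective _ hbij) Gc.domRestrict
  exact ⟨e1.symm.trans (iccHomeoI a b hab)⟩

theorem no_end [T2Space X] [ConnectedSpace X] [SecondCountableTopology X] [Nonempty X]
    [ChartedSpace (EuclideanHalfSpace 1) X] {a b : ℝ} {g : ℝ → X} (A : Arc a b g)
    (hno : ∀ q, q ∉ g '' Ioo a b → ¬ Tendsto g (𝓝[<] b) (𝓝 q))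
    (hno' : ∀ q, q ∉ g '' Ioo a b → ¬ Tendsto (fun t => g (-t)) (𝓝[<] (-a)) (𝓝 q)) :
    Nonempty (X ≃ₜ ℝ) := by
  have hab := A.lt
  have hun : g '' Ioo a b = univ := by
    apply IsClopen.eq_univ
    · refine ⟨?_, A.isOpen⟩
      rw [← closure_subset_iff_isClosed]
      intro x hx
      by_contra hx'
      rcases A.closure_lim hx hx' with h | h
      · exact hno x hx' h
      · exact hno' x hx' h
    · exact (nonempty_Ioo.2 hab).image _
  obtain ⟨e⟩ := mkHomeo A.c A.i hun fun t ht ε he => A.nhds_sub ht he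
  obtain ⟨e'⟩ := Ioo_homeo hab
  exact ⟨e.trans e'⟩

theorem classify [T2Space X] [ConnectedSpace X] [SecondCountableTopology X] [Nonempty X]
    [ChartedSpace (EuclideanHalfSpace 1) X] :
    Nonempty (X ≃ₜ ℝ) ∨ Nonempty (X ≃ₜ Circle) ∨
        Nonempty (X ≃ₜ (Set.Ici (0 : ℝ))) ∨ Nonempty (X ≃ₜ (Set.Icc (0 : ℝ) 1)) := by
  by_cases hcirc : Nonempty (X ≃ₜ Circle)
  · exact Or.inr (Or.inl hcirc)
  obtain ⟨a, b, g, A, hmax⟩ := exists_max (X := X)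
  have hR : ∀ p, p ∉ g '' Ioo a b → Tendsto g (𝓝[<] b) (𝓝 p) →
      ∀ c, a ≤ c → c < b → insert p (g '' Ioo c b) ∈ 𝓝 p := by
    intro p hp hl c hc hcb
    obtain ⟨h, k, r, S, H⟩ := exists_ch p
    rcases H.hS with rfl | rfl
    · refine (hcirc (interior_end A ?_ hp hl H)).elim
      intro b' g' A' hb he
      exact hb.ne' (hmax a b' g' A' le_rfl hb.le he).2
    · exact boundary_end A.lt A.c hp hl H hc hcb
  have hL : ∀ p, p ∉ g '' Ioo a b → Tendsto (fun t => g (-t)) (𝓝[<] (-a)) (𝓝 p) →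
      ∀ c, a < c → c ≤ b → insert p (g '' Ioo a c) ∈ 𝓝 p := by
    intro p hp hl c hc hcb
    obtain ⟨h, k, r, S, H⟩ := exists_ch p
    rcases H.hS with rfl | rfl
    · refine (hcirc (interior_end A.neg ?_ (by rwa [image_neg']) hl H)).elim
      intro b' g' A' hb he
      have A'' := A'.neg
      rw [neg_neg] at A''
      have := (hmax (-b') b _ A'' (by linarith) le_rfl (fun t ht => by
        have := he (x := -t) ⟨by linarith [ht.2], by linarith [ht.1]⟩
        simpa using this)).1
      linarith
    · have := boundary_end A.neg.lt A.neg.c (by rwa [image_neg']) hl H (c := -c) (by linarith) (by linarith)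
      rwa [image_neg'] at this
  by_cases h1 : ∃ p, p ∉ g '' Ioo a b ∧ Tendsto g (𝓝[<] b) (𝓝 p) <;>
  by_cases h2 : ∃ q, q ∉ g '' Ioo a b ∧ Tendsto (fun t => g (-t)) (𝓝[<] (-a)) (𝓝 q)
  · obtain ⟨p, hp, hl⟩ := h1
    obtain ⟨q, hq, hl'⟩ := h2
    exact Or.inr (Or.inr (Or.inr (two_ends A hp hl (hR p hp hl) hq hl' (hL q hq hl'))))
  · obtain ⟨p, hp, hl⟩ := h1
    push Not at h2
    exact Or.inr (Or.inr (Or.inl (one_end A hp hl (hR p hp hl) h2)))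
  · obtain ⟨q, hq, hl⟩ := h2
    push Not at h1
    refine Or.inr (Or.inr (Or.inl (one_end A.neg (p := q) (by rwa [image_neg']) hl ?_ ?_)))
    · intro c hc hcb
      have := hL q hq hl (-c) (by linarith) (by linarith)
      have e := image_neg' a (-c) g
      rw [neg_neg] at e
      rwa [e]
    · intro p hp
      rw [image_neg'] at hp
      simpa using h1 p hp
  · push Not at h1 h2
    exact Or.inl (no_end A h1 h2)

theorem not_real_ici : ¬ Nonempty (ℝ ≃ₜ Ici (0:ℝ)) := by
  rintro ⟨e⟩
  have hc : Continuous fun t => (e t : ℝ) := continuous_subtype_val.comp e.continuous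
  have hi : Function.Injective fun t => (e t : ℝ) := Subtype.val_injective.comp e.injective
  have h0 : (e (e.symm ⟨0, self_mem_Ici⟩) : ℝ) = 0 := by simp
  rcases hc.strictMono_of_inj hi with h | h
  · have := h (show e.symm ⟨0, self_mem_Ici⟩ - 1 < e.symm ⟨0, self_mem_Ici⟩ by linarith)
    simp only [h0] at this
    exact absurd (e (e.symm ⟨0, self_mem_Ici⟩ - 1)).2 (not_le.2 this)
  · have := h (show e.symm ⟨0, self_mem_Ici⟩ < e.symm ⟨0, self_mem_Ici⟩ + 1 by linarith)
    simp only [h0] at this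
    exact absurd (e (e.symm ⟨0, self_mem_Ici⟩ + 1)).2 (not_le.2 this)

theorem not_circle_icc : ¬ Nonempty (Circle ≃ₜ Icc (0:ℝ) 1) := by
  rintro ⟨e⟩
  let φ : AddCircle (1:ℝ) → ℝ := fun x => e (AddCircle.homeomorphCircle one_ne_zero x)
  have φc : Continuous φ := by fun_prop
  have φi : Function.Injective φ :=
    Subtype.val_injective.comp (e.injective.comp (AddCircle.homeomorphCircle one_ne_zero).injective)
  let f : ℝ → ℝ := fun t => φ (t : AddCircle (1:ℝ))
  have fc : Continuous f := φc.comp (AddCircle.continuous_mk' 1)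
  have f01 : f 0 = f 1 := by
    simp only [f]
    congr 1
    simpa using (AddCircle.coe_period (1:ℝ)).symm
  have : Fact ((0:ℝ) < 1) := ⟨one_pos⟩
  have fi : ∀ a : ℝ, InjOn f (Ico a (a + 1)) := fun a s hs t ht h =>
    (AddCircle.coe_eq_coe_iff_of_mem_Ico hs ht).1 (φi h)
  have i1 : InjOn f (Icc 0 (3/4)) := by
    refine (fi 0).mono ?_
    rintro t ⟨h1, h2⟩
    exact ⟨h1, by linarith⟩
  have i2 : InjOn f (Icc (1/4) 1) := by
    refine (fi (1/4)).mono ?_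
    rintro t ⟨h1, h2⟩
    exact ⟨h1, by linarith⟩
  rcases fc.continuousOn.strictMonoOn_of_injOn_Icc' (by norm_num) i1 with h | h <;>
  rcases fc.continuousOn.strictMonoOn_of_injOn_Icc' (by norm_num) i2 with h' | h' <;>
  · have a1 := @h 0 (by norm_num) (1/2) (by norm_num) (by norm_num)
    have a2 := @h (1/4) (by norm_num) (1/2) (by norm_num) (by norm_num)
    have a3 := @h' (1/4) (by norm_num) (1/2) (by norm_num) (by norm_num)
    have a4 := @h' (1/2) (by norm_num) 1 (by norm_num) (by norm_num)
    linarith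

theorem not_compact_ici : ¬ CompactSpace (Ici (0:ℝ)) := by
  intro h
  have := (isCompact_iff_compactSpace.2 h).bddAbove
  exact not_bddAbove_Ici 0 this

end OneMfd



/-- Every connected nonempty 1-dimensional topological manifold with boundary
(a second-countable Hausdorff space locally modelled on `[0,∞)`, i.e. charted in the
half-space `EuclideanHalfSpace 1`) is homeomorphic to exactly one of: `ℝ`, the circle `S¹`,
the half-line `[0,∞)`, or the closed interval `[0,1]`. -/
theorem stmt_7 {X : Type*} [TopologicalSpace X] [T2Space X] [SecondCountableTopology X]
    [ChartedSpace (EuclideanHalfSpace 1) X] [Nonempty X] [ConnectedSpace X] :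
    (Nonempty (X ≃ₜ ℝ) ∨ Nonempty (X ≃ₜ Circle) ∨
        Nonempty (X ≃ₜ (Set.Ici (0 : ℝ))) ∨ Nonempty (X ≃ₜ (Set.Icc (0 : ℝ) 1))) ∧
      ¬(Nonempty (X ≃ₜ ℝ) ∧ Nonempty (X ≃ₜ Circle)) ∧
      ¬(Nonempty (X ≃ₜ ℝ) ∧ Nonempty (X ≃ₜ (Set.Ici (0 : ℝ)))) ∧
      ¬(Nonempty (X ≃ₜ ℝ) ∧ Nonempty (X ≃ₜ (Set.Icc (0 : ℝ) 1))) ∧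
      ¬(Nonempty (X ≃ₜ Circle) ∧ Nonempty (X ≃ₜ (Set.Ici (0 : ℝ)))) ∧
      ¬(Nonempty (X ≃ₜ Circle) ∧ Nonempty (X ≃ₜ (Set.Icc (0 : ℝ) 1))) ∧
      ¬(Nonempty (X ≃ₜ (Set.Ici (0 : ℝ))) ∧ Nonempty (X ≃ₜ (Set.Icc (0 : ℝ) 1))) := by
  have hR : ¬ CompactSpace ℝ := not_compactSpace_iff.2 inferInstance
  refine ⟨OneMfd.classify, ?_, ?_, ?_, ?_, ?_, ?_⟩
  · rintro ⟨⟨e⟩, ⟨f⟩⟩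
    exact hR (f.symm.trans e).compactSpace
  · rintro ⟨⟨e⟩, ⟨f⟩⟩
    exact OneMfd.not_real_ici ⟨e.symm.trans f⟩
  · rintro ⟨⟨e⟩, ⟨f⟩⟩
    exact hR (f.symm.trans e).compactSpace
  · rintro ⟨⟨e⟩, ⟨f⟩⟩
    exact OneMfd.not_compact_ici (e.symm.trans f).compactSpace
  · rintro ⟨⟨e⟩, ⟨f⟩⟩
    exact OneMfd.not_circle_icc ⟨e.symm.trans f⟩
  · rintro ⟨⟨e⟩, ⟨f⟩⟩
    exact OneMfd.not_compact_ici (f.symm.trans e).compactSpace
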